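/- Let a ∈ (−1, 0) and let W : ℝ → ℝ be a continuous function satisfying the left logarithmic growth condition. Then for every v_0 ∈ [−1,0] the series Σ_{k=1}^{∞} a^k ∫_{−1}^{v_0} ∫_{−1}^{v_1} … ∫_{−1}^{v_{k−1}} ( W(v_k − k) − W(−k−1) ) dv_k … dv_2 dv_1 converges absolutely, and the function f(v_0) := Σ_{k=1}^{∞} a^k ∫_{−1}^{v_0} … ∫_{−1}^{v_{k−1}} ( W(v_k − k) − W(−k−1) ) dv_k … dv_1 − W(−1) + W(v_0) is continuous on [−1,0]. -/

import Mathlib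

/-! On `[-1, 0]` every integration in the iterated integral runs over an interval of length at most
one, so `iterInt g n` is bounded there by any bound for `|g|` (`abs_iterInt_le`). With the growth
condition, and the crude estimate `√(log (k+2)) ≤ k+2`, the `k`-th term of the series is at most
`C (k+2) |a|^k` in absolute value, which is summable because `|a| < 1`. The Weierstrass M-test
gives absolute convergence and the continuity of the sum, each term being continuous. -/

open MeasureTheory Set

/-- `n`-fold iterated integral `∫_{-1}^{v} ∫_{-1}^{v_1} … ∫_{-1}^{v_{n-1}} g(v_n) dv_n … dv_1`. -/
noncomputable def iterInt (g : ℝ → ℝ) : ℕ → ℝ → ℝ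
  | 0 => g
  | (n + 1) => fun v => ∫ u in (-1 : ℝ)..v, iterInt g n u

/-- The `k`-th term `a^k ∫_{-1}^{v} … ∫_{-1}^{v_{k-1}} (W(v_k - k) - W(-k-1)) dv_k … dv_1`
of the series defining `f`. -/
noncomputable def seriesTerm (a : ℝ) (W : ℝ → ℝ) (k : ℕ) (v : ℝ) : ℝ :=
  a ^ k * iterInt (fun u => W (u - (k : ℝ)) - W (-(k : ℝ) - 1)) k v

/-- The left logarithmic growth condition:
`sup_{v ∈ [-1,0]} |W(v-k) - W(-k-1)| ≤ C √(log (k+2))` for all `k ∈ ℕ`, for some `C > 0`. -/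
def LeftLogGrowth (W : ℝ → ℝ) : Prop :=
  ∃ C > (0 : ℝ), ∀ k : ℕ, ∀ v ∈ Set.Icc (-1 : ℝ) 0,
    |W (v - (k : ℝ)) - W (-(k : ℝ) - 1)| ≤ C * Real.sqrt (Real.log ((k : ℝ) + 2))

theorem continuous_iterInt {g : ℝ → ℝ} (hg : Continuous g) (n : ℕ) :
    Continuous (iterInt g n) := by
  induction n with
  | zero => exact hg
  | succ n ih =>
    exact intervalIntegral.continuous_primitive (fun _ _ => ih.intervalIntegrable _ _) _

theorem abs_iterInt_le {g : ℝ → ℝ} {M : ℝ} (hM : ∀ v ∈ Icc (-1 : ℝ) 0, |g v| ≤ M) (n : ℕ) :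
    ∀ v ∈ Icc (-1 : ℝ) 0, |iterInt g n v| ≤ M := by
  induction n with
  | zero => exact hM
  | succ n ih =>
    intro v hv
    have hM0 : 0 ≤ M := (abs_nonneg _).trans (hM v hv)
    have h : ‖∫ u in (-1 : ℝ)..v, iterInt g n u‖ ≤ M * |v - (-1)| := by
      refine intervalIntegral.norm_integral_le_of_norm_le_const fun u hu => ?_
      rw [uIoc_of_le hv.1] at hu
      exact ih u ⟨hu.1.le, hu.2.trans hv.2⟩
    have hlen : |v - (-1)| ≤ 1 := by
      rw [abs_le]; constructor <;> linarith [hv.1, hv.2]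
    exact h.trans (mul_le_of_le_one_right hM0 hlen)

theorem continuous_seriesTerm (a : ℝ) {W : ℝ → ℝ} (hW : Continuous W) (k : ℕ) :
    Continuous (seriesTerm a W k) :=
  continuous_const.mul (continuous_iterInt (by fun_prop) k)

theorem sqrt_log_add_two_le (k : ℕ) : √(Real.log ((k : ℝ) + 2)) ≤ (k : ℝ) + 2 := by
  have hk : (0 : ℝ) ≤ k := k.cast_nonneg
  refine Real.sqrt_le_iff.2 ⟨by linarith, ?_⟩
  have := Real.log_le_sub_one_of_pos (show (0 : ℝ) < (k : ℝ) + 2 by linarith)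
  nlinarith

theorem summable_majorant {a : ℝ} (ha : |a| < 1) (C : ℝ) :
    Summable fun k : ℕ => |a| ^ k * (C * ((k : ℝ) + 2)) := by
  have ha' : ‖|a|‖ < 1 := by rwa [Real.norm_eq_abs, abs_abs]
  have h1 := summable_pow_mul_geometric_of_norm_lt_one 1 ha'
  have h0 := summable_geometric_of_norm_lt_one ha'
  refine ((h1.mul_left C).add (h0.mul_left (2 * C))).congr fun k => ?_
  ring

theorem stmt_6 (a : ℝ) (ha : a ∈ Set.Ioo (-1 : ℝ) 0) (W : ℝ → ℝ) (hW : Continuous W)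
    (hlog : LeftLogGrowth W) :
    (∀ v ∈ Set.Icc (-1 : ℝ) 0, Summable (fun k : ℕ => |seriesTerm a W (k + 1) v|)) ∧
    ContinuousOn
      (fun v => (∑' k : ℕ, seriesTerm a W (k + 1) v) - W (-1) + W v)
      (Set.Icc (-1 : ℝ) 0) := by
  obtain ⟨C, hC, hgrowth⟩ := hlog
  have ha1 : |a| < 1 := abs_lt.2 ⟨ha.1, ha.2.trans one_pos⟩
  have hbound (k : ℕ) (v : ℝ) (hv : v ∈ Icc (-1 : ℝ) 0) :
      |seriesTerm a W k v| ≤ |a| ^ k * (C * ((k : ℝ) + 2)) := by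
    rw [seriesTerm, abs_mul, abs_pow]
    refine mul_le_mul_of_nonneg_left (abs_iterInt_le (fun u hu => ?_) k v hv) (by positivity)
    exact (hgrowth k u hu).trans (mul_le_mul_of_nonneg_left (sqrt_log_add_two_le k) hC.le)
  have hsum := (summable_nat_add_iff 1).2 (summable_majorant ha1 C)
  refine ⟨fun v hv => Summable.of_nonneg_of_le (fun _ => abs_nonneg _)
    (fun k => hbound (k + 1) v hv) hsum, ?_⟩
  have hcont : ContinuousOn (fun v => ∑' k : ℕ, seriesTerm a W (k + 1) v) (Icc (-1 : ℝ) 0) :=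
    continuousOn_tsum (fun k => (continuous_seriesTerm a hW (k + 1)).continuousOn) hsum
      fun k v hv => hbound (k + 1) v hv
  exact (hcont.sub continuousOn_const).add hW.continuousOn
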